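/- Every polycyclic-by-finite group, that is, every group having a polycyclic normal subgroup of finite index, admits a golden system. -/

import Mathlib

/-!
Only left multiplication is needed, and only positive words in a generating tuple that contains
the inverses it uses. Suppose a finite colouring of `G` is such that the colour of `1` is not
shared, and every `x` can be reached from `1` by left multiplications by generators in which the
current colour alone determines the next colour (`Traceable`). Such a path of colours is a
consequence of the configuration set, so it is followed in every `H` with the same configuration
set (`Traceable.exists_word`), and this is the golden system.

Such colourings (`HasTraceableColoring`) pass from a subgroup `M` to a group `G` along a transversal
`s : A → G` which can itself be walked through in the same colour-determined manner: an element
`s a * n` gets the colours of `a` and `n`; the path first builds `n` inside `M` and then moves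
`a` away from the base point (`HasTraceableColoring.extend`). For `M` of finite index the elements
`a` have distinct colours; for an infinite cyclic quotient the transversal is `k ↦ t ^ k`, the colour
is the sign of `k`, and the path moves away from `0`. In this way the exponents
in a normal form `s t_k ^ n_k ⋯ t_1 ^ n_1` are built up from right to left, and the finite-index
step also covers the finite group on top.
-/

open scoped Pointwise

universe u v

/-- `g` is an (ordered, finite) generating tuple of the group `G`. -/
def IsGenerating {G : Type*} [Group G] {n : ℕ} (g : Fin n → G) : Prop :=
  Subgroup.closure (Set.range g) = ⊤

/-- `E` is an (ordered, finite) partition of the underlying set of `G`: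
every element lies in exactly one cell. -/
def IsPartition {G : Type*} {m : ℕ} (E : Fin m → Set G) : Prop :=
  ∀ x : G, ∃! i : Fin m, x ∈ E i

/-- The type in which two-sided configurations corresponding to a generating tuple of
length `n` and a partition of length `m` live: a tuple `(c₀, (c₁,…,cₙ), (c_{n+1},…,c_{2n}))`. -/
abbrev TwoSidedConfig (n m : ℕ) := Fin m × (Fin n → Fin m) × (Fin n → Fin m)

/-- The two-sided configuration set `Con_t(𝔤, ℰ)`. -/
def TwoSidedConfigSet {G : Type*} [Group G] {n m : ℕ} (g : Fin n → G) (E : Fin m → Set G) :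
    Set (TwoSidedConfig n m) :=
  {c | ∃ x ∈ E c.1, ∀ i : Fin n, g i * x ∈ E (c.2.1 i) ∧ x * g i ∈ E (c.2.2 i)}

/-- `Con_t(G)`: the collection of all two-sided configuration sets of `G`,
over all configuration pairs `(𝔤, ℰ)`. -/
def TwoSidedConfigSets (G : Type*) [Group G] : Set (Σ n m : ℕ, Set (TwoSidedConfig n m)) :=
  {S | ∃ g : Fin S.1 → G, ∃ E : Fin S.2.1 → Set G,
    IsGenerating g ∧ IsPartition E ∧ S.2.2 = TwoSidedConfigSet g E}

/-- Two-sided configuration equivalence `G ≈ₜ H`. -/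
def ConfigEqT (G : Type*) (H : Type*) [Group G] [Group H] : Prop :=
  TwoSidedConfigSets G = TwoSidedConfigSets H

/-- The (one-sided) configuration set `Con(𝔤, ℰ)`. -/
def ConfigSet {G : Type*} [Group G] {n m : ℕ} (g : Fin n → G) (E : Fin m → Set G) :
    Set (Fin m × (Fin n → Fin m)) :=
  {c | ∃ x ∈ E c.1, ∀ k : Fin n, g k * x ∈ E (c.2 k)}

/-- `Con(G)`: the collection of all configuration sets of `G`. -/
def ConfigSets (G : Type*) [Group G] : Set (Σ n m : ℕ, Set (Fin m × (Fin n → Fin m))) :=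
  {S | ∃ g : Fin S.1 → G, ∃ E : Fin S.2.1 → Set G,
    IsGenerating g ∧ IsPartition E ∧ S.2.2 = ConfigSet g E}

/-- Configuration equivalence `G ≈ H`. -/
def ConfigEq (G : Type*) (H : Type*) [Group G] [Group H] : Prop :=
  ConfigSets G = ConfigSets H

/-- The word `W(J, ρ; 𝔤) = ∏_{i=1}^{p} g_{J(i)}^{ρ(i)}` associated to a representative
pair `(J, ρ)` (here `ρ i = true` encodes exponent `1`, and `ρ i = false` exponent `-1`). -/
def word {G : Type*} [Group G] {n p : ℕ} (g : Fin n → G) (J : Fin p → Fin n)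
    (ρ : Fin p → Bool) : G :=
  ((List.finRange p).map (fun i => if ρ i then g (J i) else (g (J i))⁻¹)).prod

/-- The configuration pair `(𝔤, q⁻¹(ℰ))` is golden w.r.t. the normal subgroup `N`,
where `ℰ` is a partition of `G ⧸ N` containing the singleton `{1}`. -/
def IsGoldenConfigPair {G : Type u} [Group G] (N : Subgroup G) [N.Normal] {n m : ℕ}
    (g : Fin n → G) (E : Fin m → Set (G ⧸ N)) : Prop :=
  IsGenerating g ∧ IsPartition E ∧
  ∃ i₀ : Fin m, E i₀ = ({1} : Set (G ⧸ N)) ∧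
  ∃ (p : G → ℕ) (J : ∀ x : G, Fin (p x) → Fin n) (ρ : ∀ x : G, Fin (p x) → Bool),
    (∀ x : G, x ∉ N →
      QuotientGroup.mk' N x = word (fun i => QuotientGroup.mk' N (g i)) (J x) (ρ x)) ∧
    (∀ (H : Type v) [Group H] (h : Fin n → H) (F : Fin m → Set H),
      IsGenerating h → IsPartition F →
      TwoSidedConfigSet g (fun i => QuotientGroup.mk' N ⁻¹' E i) = TwoSidedConfigSet h F →
      ∀ x : G, x ∉ N → word h (J x) (ρ x) • F i₀ ∩ F i₀ = ∅)

/-- `G` has a golden configuration pair w.r.t. the normal subgroup `N`. -/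
def HasGoldenConfigPairWrt (G : Type u) [Group G] (N : Subgroup G) [N.Normal] : Prop :=
  ∃ (n m : ℕ) (g : Fin n → G) (E : Fin m → Set (G ⧸ N)), IsGoldenConfigPair.{u, v} N g E

/-- `G` has a golden configuration pair (i.e. one w.r.t. the trivial subgroup). -/
def HasGoldenConfigPair (G : Type u) [Group G] : Prop :=
  HasGoldenConfigPairWrt.{u, v} G ⊥

/-- `(𝔤, ς, {(J_g, ρ_g)})` is a golden system w.r.t. the normal subgroup `N`.  The
finite-range function `ς` on `G ⧸ N` is encoded as a surjection onto `Fin m`; the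
`ς`-partition of `G` is then `v ↦ (ς ∘ q)⁻¹(v)`, `v : Fin m`. -/
def IsGoldenSystem {G : Type u} [Group G] (N : Subgroup G) [N.Normal] {n m : ℕ}
    (g : Fin n → G) (ς : G ⧸ N → Fin m)
    {p : G → ℕ} (J : ∀ x : G, Fin (p x) → Fin n) (ρ : ∀ x : G, Fin (p x) → Bool) : Prop :=
  IsGenerating g ∧ Function.Surjective ς ∧
  (∀ x : G, x ∉ N →
    QuotientGroup.mk' N x = word (fun i => QuotientGroup.mk' N (g i)) (J x) (ρ x)) ∧
  ((fun x : G => ς (QuotientGroup.mk' N x)) ⁻¹' {ς (1 : G ⧸ N)} = (N : Set G)) ∧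
  (∀ (H : Type v) [Group H] (h : Fin n → H) (F : Fin m → Set H),
    IsGenerating h → IsPartition F →
    TwoSidedConfigSet g (fun v => (fun x : G => ς (QuotientGroup.mk' N x)) ⁻¹' {v})
      = TwoSidedConfigSet h F →
    ∀ x : G, x ∉ N →
      word h (J x) (ρ x) • F (ς (1 : G ⧸ N)) ⊆ F (ς (QuotientGroup.mk' N x)))

/-- `G` admits a golden system w.r.t. the normal subgroup `N`. -/
def HasGoldenSystemWrt (G : Type u) [Group G] (N : Subgroup G) [N.Normal] : Prop :=
  ∃ (n m : ℕ) (g : Fin n → G) (ς : G ⧸ N → Fin m) (p : G → ℕ)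
    (J : ∀ x : G, Fin (p x) → Fin n) (ρ : ∀ x : G, Fin (p x) → Bool),
    IsGoldenSystem.{u, v} N g ς J ρ

/-- `G` admits a golden system (i.e. one w.r.t. the trivial subgroup). -/
def HasGoldenSystem (G : Type u) [Group G] : Prop :=
  HasGoldenSystemWrt.{u, v} G ⊥

/-- A group is Hopfian if every surjective endomorphism is an automorphism. -/
def IsHopfianGroup (G : Type*) [Group G] : Prop :=
  ∀ f : G →* G, Function.Surjective f → Function.Bijective f

/-- A group is finitely presented if it is presented by finitely many generators
and finitely many relators. -/
def IsFinitelyPresentedGroup (G : Type*) [Group G] : Prop :=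
  ∃ (n : ℕ) (rels : Set (FreeGroup (Fin n))),
    rels.Finite ∧ Nonempty (PresentedGroup rels ≃* G)

/-- A group is polycyclic if it has a subnormal series with cyclic factors. -/
def IsPolycyclic (G : Type*) [Group G] : Prop :=
  ∃ (k : ℕ) (c : Fin (k + 1) → Subgroup G),
    c 0 = ⊥ ∧ c (Fin.last k) = ⊤ ∧
    ∀ i : Fin k, c i.castSucc ≤ c i.succ ∧
      ∃ hn : ((c i.castSucc).subgroupOf (c i.succ)).Normal,
        letI := hn
        IsCyclic ((c i.succ) ⧸ (c i.castSucc).subgroupOf (c i.succ))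

/-- An FC-group: every conjugacy class is finite. -/
def IsFCGroup (G : Type*) [Group G] : Prop :=
  ∀ g : G, {h : G | IsConj g h}.Finite

/-- A normal subset: `hM = Mh` for all `h`. -/
def IsNormalSubset {H : Type*} [Group H] (M : Set H) : Prop :=
  ∀ h : H, (fun x => h * x) '' M = (fun x => x * h) '' M

/-- `E'` is a refinement of the partition `E`. -/
def IsRefinement {G : Type*} {r s : ℕ} (E' : Fin s → Set G) (E : Fin r → Set G) : Prop :=
  ∀ l : Fin s, ∃ k : Fin r, E' l ⊆ E k

/-- The pairs `(ℰ', ℰ)` and `(ℱ', ℱ)` are similar. -/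
def SimilarPairs {G H : Type*} {r s : ℕ} (E : Fin r → Set G) (E' : Fin s → Set G)
    (F : Fin r → Set H) (F' : Fin s → Set H) : Prop :=
  ∀ k : Fin r, {l : Fin s | (E k ∩ E' l).Nonempty} = {l : Fin s | (F k ∩ F' l).Nonempty}

/-! ### Traceable colourings -/

/-- `Traceable g σ x`: there is a path from `1` to `x` of left multiplications by the `g i`, along
which the colour of the current point determines the colour of the next one, i.e. all points `z`
with the colour of the current point move to the same colour. -/
inductive Traceable {G ι C : Type*} [Group G] (g : ι → G) (σ : G → C) : G → Prop
  | one : Traceable g σ 1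
  | step (x : G) (i : ι) : Traceable g σ x →
      (∀ z, σ z = σ x → σ (g i * z) = σ (g i * x)) → Traceable g σ (g i * x)

/-- `G` has a finite family `g` and a finite colouring `σ` separating `1` from all other elements,
for which every element is traceable. The family then generates `G`, even as a monoid. -/
def HasTraceableColoring (G : Type u) [Group G] : Prop :=
  ∃ (ι C : Type u) (_ : Finite ι) (_ : Finite C) (g : ι → G) (σ : G → C),
    (∀ x, σ x = σ 1 → x = 1) ∧ ∀ x, Traceable g σ x

theorem hasTraceableColoring_of_subsingleton (G : Type u) [Group G] [Subsingleton G] :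
    HasTraceableColoring G :=
  ⟨PEmpty, PUnit, inferInstance, inferInstance, PEmpty.elim, fun _ => PUnit.unit,
    fun _ _ => Subsingleton.elim _ _, fun x => Subsingleton.elim 1 x ▸ Traceable.one⟩

/-- Extension along a transversal `s : A → G` of an embedded group `M`. The hypothesis `hr` is the
induction principle saying that every `a` can be reached from `a₀` by steps `u j * s a = s a'` in
which the colour `τ a` determines the colour `τ a'`. -/
theorem HasTraceableColoring.extend {M G : Type u} [Group M] [Group G] (f : M →* G)
    {A : Type*} {D κ : Type u} [Finite D] [Finite κ] (s : A → G) (a₀ : A) (hs : s a₀ = 1)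
    (hb : Function.Bijective fun p : A × M => s p.1 * f p.2)
    (τ : A → D) (u : κ → G) (hτ : ∀ a, τ a = τ a₀ → a = a₀)
    (hr : ∀ P : A → Prop, P a₀ →
      (∀ a a' j, P a → u j * s a = s a' →
        (∀ b, τ b = τ a → ∃ b', u j * s b = s b' ∧ τ b' = τ a') → P a') → ∀ a, P a)
    (hM : HasTraceableColoring M) : HasTraceableColoring G := by
  obtain ⟨ι, C, _, _, g, σ, h1, h2⟩ := hM
  let e := Equiv.ofBijective _ hb
  let σ' : G → D × C := fun x => (τ (e.symm x).1, σ (e.symm x).2)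
  have key : ∀ a n, σ' (s a * f n) = (τ a, σ n) := by
    intro a n
    have : e.symm (s a * f n) = (a, n) := e.symm_apply_apply (a, n)
    simp only [σ', this]
  have key' : ∀ n, σ' (f n) = (τ a₀, σ n) := by
    intro n
    rw [← key, hs, one_mul]
  have hsurj : ∀ x, ∃ a n, x = s a * f n := fun x => by
    obtain ⟨p, hp⟩ := hb.2 x
    exact ⟨p.1, p.2, hp.symm⟩
  have key1 : σ' 1 = (τ a₀, σ 1) := by rw [← key', map_one]
  have hfib : ∀ z n, σ' z = σ' (f n) → ∃ m, z = f m ∧ σ m = σ n := by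
    intro z n hz
    obtain ⟨a, m, rfl⟩ := hsurj z
    rw [key, key', Prod.mk.injEq] at hz
    obtain rfl := hτ a hz.1
    exact ⟨m, by rw [hs, one_mul], hz.2⟩
  have hf : ∀ n, Traceable (Sum.elim (fun i => f (g i)) u) σ' (f n) := by
    intro n
    induction h2 n with
    | one => rw [map_one]; exact Traceable.one
    | step x i _ hx ih =>
      rw [map_mul]
      refine Traceable.step (f x) (Sum.inl i) ih ?_
      intro z hz
      obtain ⟨m, rfl, hm⟩ := hfib z x hz
      simp only [Sum.elim_inl, ← map_mul, key', hx m hm]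
  refine ⟨ι ⊕ κ, D × C, inferInstance, inferInstance, Sum.elim (fun i => f (g i)) u, σ', ?_, ?_⟩
  · intro x hx
    rw [← map_one f] at hx
    obtain ⟨m, rfl, hm⟩ := hfib x 1 hx
    rw [h1 m hm, map_one]
  · intro x
    obtain ⟨a, n, rfl⟩ := hsurj x
    refine hr (fun a => Traceable (Sum.elim (fun i => f (g i)) u) σ' (s a * f n)) ?_ ?_ a
    · rw [hs, one_mul]; exact hf n
    · intro a a' j ha hj hstep
      rw [← hj, mul_assoc]
      refine Traceable.step _ (Sum.inr j) ha ?_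
      intro z hz
      obtain ⟨b, m, rfl⟩ := hsurj z
      rw [key, key, Prod.mk.injEq] at hz
      obtain ⟨b', hb', hc⟩ := hstep b hz.1
      simp only [Sum.elim_inr, ← mul_assoc, hb', hj, key, hc, hz.2]

theorem HasTraceableColoring.of_finiteIndex {M G : Type u} [Group M] [Group G] (f : M →* G)
    (hf : Function.Injective f) (hfin : f.range.FiniteIndex) (hM : HasTraceableColoring M) :
    HasTraceableColoring G := by
  classical
  let a₀ : G ⧸ f.range := ((1 : G) : G ⧸ f.range)
  let s : G ⧸ f.range → G := fun q => if q = a₀ then 1 else q.out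
  have hs1 : s a₀ = 1 := if_pos rfl
  have hs : ∀ q, ((s q : G) : G ⧸ f.range) = q := by
    intro q
    by_cases h : q = a₀
    · simp only [s, if_pos h]; exact h.symm
    · simp only [s, if_neg h]; exact QuotientGroup.out_eq' q
  have : Finite (G ⧸ f.range) := Subgroup.finite_quotient_of_finiteIndex
  refine hM.extend f s a₀ hs1 ⟨?_, ?_⟩ id s (fun a h => h) ?_
  · rintro ⟨a, m⟩ ⟨b, n⟩ h
    replace h : s a * f m = s b * f n := h
    have hmk : ∀ q n, ((s q * f n : G) : G ⧸ f.range) = q := fun q n => by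
      rw [QuotientGroup.mk_mul_of_mem _ (f.mem_range.2 ⟨n, rfl⟩), hs]
    have hab : a = b := by rw [← hmk a m, h, hmk]
    subst hab
    rw [hf (mul_left_cancel h)]
  · intro x
    obtain ⟨n, hn⟩ : (s (x : G ⧸ f.range))⁻¹ * x ∈ f.range := by
      rw [← QuotientGroup.eq, hs]
    exact ⟨((x : G ⧸ f.range), n), by simp [hn]⟩
  · intro P h0 hstep a
    refine hstep a₀ a a h0 (by rw [hs1, mul_one]) ?_
    rintro b rfl
    exact ⟨a, by simp [hs1], rfl⟩

theorem HasTraceableColoring.of_zpow {M G : Type u} [Group M] [Group G] (f : M →* G)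
    (hf : Function.Injective f) (t : G) (ht : ∀ x, ∃ (k : ℤ) (n : M), x = t ^ k * f n)
    (ht' : ∀ k : ℤ, t ^ k ∈ f.range → k = 0) (hM : HasTraceableColoring M) :
    HasTraceableColoring G := by
  refine hM.extend f (fun k : ℤ => t ^ k) 0 (zpow_zero t) ⟨?_, ?_⟩
    (fun k => ULift.up (SignType.sign k)) (fun j : ULift Bool => if j.down then t else t⁻¹) ?_ ?_
  · rintro ⟨a, m⟩ ⟨b, n⟩ h
    replace h : t ^ a * f m = t ^ b * f n := h
    have hab : a = b := by
      have := ht' (-b + a) ⟨n * m⁻¹, by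
        rw [zpow_add, zpow_neg, map_mul, map_inv, mul_inv_eq_iff_eq_mul, mul_assoc, h]; group⟩
      omega
    subst hab
    rw [hf (mul_left_cancel h)]
  · intro x
    obtain ⟨k, n, rfl⟩ := ht x
    exact ⟨(k, n), rfl⟩
  · intro a ha
    simpa using ha
  · intro P h0 hstep a
    have hup : ∀ k : ℤ, t * t ^ k = t ^ (k + 1) := fun k => by
      rw [add_comm, zpow_add, zpow_one]
    have hdn : ∀ k : ℤ, t⁻¹ * t ^ k = t ^ (k - 1) := fun k => by
      rw [sub_eq_neg_add, zpow_add, zpow_neg_one]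
    induction a with
    | zero => exact h0
    | succ i ih =>
      refine hstep _ _ ⟨true⟩ ih (hup _) fun b hb => ⟨b + 1, by simp [hup], ?_⟩
      have hb0 : 0 ≤ b := by
        rw [← sign_nonneg_iff, ULift.up_injective hb, sign_nonneg_iff]; omega
      rw [sign_pos (by omega), sign_pos (by omega)]
    | pred i ih =>
      refine hstep _ _ ⟨false⟩ ih (hdn _) fun b hb => ⟨b - 1, by simp [hdn], ?_⟩
      have hb0 : b ≤ 0 := by
        rw [← sign_nonpos_iff, ULift.up_injective hb, sign_nonpos_iff]; omega
      rw [sign_neg (by omega), sign_neg (by omega)]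

/-! ### Polycyclic-by-finite groups -/

theorem HasTraceableColoring.of_cyclic_quotient {G : Type u} [Group G] {L K : Subgroup G}
    (hLK : L ≤ K) [(L.subgroupOf K).Normal] [IsCyclic (K ⧸ L.subgroupOf K)]
    (hL : HasTraceableColoring L) : HasTraceableColoring K := by
  have hinj : Function.Injective (Subgroup.inclusion hLK) := Subgroup.inclusion_injective hLK
  have hrange : (Subgroup.inclusion hLK).range = L.subgroupOf K := Subgroup.inclusion_range hLK
  rcases finite_or_infinite (K ⧸ L.subgroupOf K) with hfin | hinf
  · refine hL.of_finiteIndex (Subgroup.inclusion hLK) hinj ?_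
    rw [hrange]
    exact Subgroup.finiteIndex_of_finite_quotient
  · obtain ⟨q, hq⟩ := IsCyclic.exists_generator (α := K ⧸ L.subgroupOf K)
    obtain ⟨t, rfl⟩ := QuotientGroup.mk_surjective q
    refine hL.of_zpow (Subgroup.inclusion hLK) hinj t ?_ ?_
    · intro x
      obtain ⟨k, hk⟩ := Subgroup.mem_zpowers_iff.1 (hq (x : K ⧸ L.subgroupOf K))
      rw [← QuotientGroup.mk_zpow, QuotientGroup.eq, ← hrange] at hk
      obtain ⟨n, hn⟩ := hk
      exact ⟨k, n, by rw [hn, mul_inv_cancel_left]⟩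
    · intro k hk
      rw [hrange, ← QuotientGroup.eq_one_iff, QuotientGroup.mk_zpow] at hk
      have h0 : orderOf (t : K ⧸ L.subgroupOf K) = 0 :=
        Infinite.orderOf_eq_zero_of_forall_mem_zpowers hq
      exact injective_zpow_iff_not_isOfFinOrder.2 (orderOf_eq_zero_iff.1 h0) (by simpa using hk)

theorem HasTraceableColoring.of_polycyclic_by_finite {G : Type u} [Group G]
    (h : ∃ N : Subgroup G, N.Normal ∧ N.FiniteIndex ∧ IsPolycyclic ↥N) :
    HasTraceableColoring G := by
  obtain ⟨N, -, hfin, k, c, h0, hl, hc⟩ := h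
  have hall : ∀ i : Fin (k + 1), HasTraceableColoring (c i) := by
    intro i
    induction i using Fin.induction with
    | zero =>
      rw [h0]
      exact hasTraceableColoring_of_subsingleton _
    | succ i ih =>
      obtain ⟨hle, hn, hcyc⟩ := hc i
      exact ih.of_cyclic_quotient hle
  refine (hall (Fin.last k)).of_finiteIndex (N.subtype.comp (c (Fin.last k)).subtype)
    (N.subtype_injective.comp (c (Fin.last k)).subtype_injective) ?_
  rwa [MonoidHom.range_comp, Subgroup.range_subtype, hl, ← MonoidHom.range_eq_map,
    Subgroup.range_subtype]

/-! ### From traceable colourings to golden systems -/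

theorem word_true_cons {G : Type*} [Group G] {n p : ℕ} (g : Fin n → G) (i : Fin n)
    (J : Fin p → Fin n) :
    word g (Fin.cons i J : Fin (p + 1) → Fin n) (fun _ => true)
      = g i * word g J (fun _ => true) := by
  simp [word, List.finRange_succ, Function.comp_def]

/-- A traceable element is a positive word whose effect on the colour of the identity can be read
off the configuration set. -/
theorem Traceable.exists_word {G : Type*} [Group G] {n m : ℕ} {g : Fin n → G} {σ : G → Fin m}
    {x : G} (hx : Traceable g σ x) :
    ∃ (p : ℕ) (J : Fin p → Fin n), x = word g J (fun _ => true) ∧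
      ∀ (H : Type v) [Group H] (h : Fin n → H) (F : Fin m → Set H), IsPartition F →
        TwoSidedConfigSet g (fun v => σ ⁻¹' {v}) = TwoSidedConfigSet h F →
        ∀ y ∈ F (σ 1), word h J (fun _ => true) * y ∈ F (σ x) := by
  induction hx with
  | one => exact ⟨0, Fin.elim0, by simp [word], fun H _ h F _ _ y hy => by simpa [word] using hy⟩
  | step x i _ hdet ih =>
    obtain ⟨p, J, hJ, hF⟩ := ih
    refine ⟨p + 1, Fin.cons i J, by rw [word_true_cons, ← hJ], fun H _ h F hP hcon y hy => ?_⟩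
    rw [word_true_cons, mul_assoc]
    have hw := hF H h F hP hcon y hy
    set w := word h J (fun _ => true) * y
    choose φ hφ using fun y => (hP y).exists
    have hmem : (σ x, fun j => φ (h j * w), fun j => φ (w * h j)) ∈ TwoSidedConfigSet h F :=
      ⟨w, hw, fun j => ⟨hφ _, hφ _⟩⟩
    rw [← hcon] at hmem
    obtain ⟨z, hz, hz'⟩ := hmem
    have h1 : σ (g i * z) = φ (h i * w) := (hz' i).1
    rw [← hdet z hz, h1]
    exact hφ _

theorem Traceable.mem_closure {G ι C : Type*} [Group G] {g : ι → G} {σ : G → C} {x : G}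
    (hx : Traceable g σ x) : x ∈ Subgroup.closure (Set.range g) := by
  induction hx with
  | one => exact one_mem _
  | step x i _ _ ih => exact mul_mem (Subgroup.subset_closure ⟨i, rfl⟩) ih

theorem HasTraceableColoring.exists_fin {G : Type u} [Group G] (hG : HasTraceableColoring G) :
    ∃ (n m : ℕ) (g : Fin n → G) (σ : G → Fin m), Function.Surjective σ ∧
      (∀ x, σ x = σ 1 → x = 1) ∧ ∀ x, Traceable g σ x := by
  obtain ⟨ι, C, _, _, g, σ, h1, h2⟩ := hG
  obtain ⟨n, ⟨e⟩⟩ := Finite.exists_equiv_fin ι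
  obtain ⟨m, ⟨d⟩⟩ := Finite.exists_equiv_fin (Set.range σ)
  have hσ : ∀ x y, d (Set.rangeFactorization σ x) = d (Set.rangeFactorization σ y) ↔ σ x = σ y := by
    intro x y
    rw [d.apply_eq_iff_eq, Subtype.ext_iff]
    rfl
  refine ⟨n, m, g ∘ e.symm, fun x => d (Set.rangeFactorization σ x),
    d.surjective.comp Set.rangeFactorization_surjective, fun x hx => h1 x ((hσ _ _).1 hx), ?_⟩
  intro x
  induction h2 x with
  | one => exact Traceable.one
  | step x i _ hx ih =>
    have := Traceable.step (g := g ∘ e.symm) x (e i) ih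
    simp only [Function.comp_apply, Equiv.symm_apply_apply, hσ] at this
    exact this hx

theorem HasTraceableColoring.hasGoldenSystem {G : Type u} [Group G]
    (hG : HasTraceableColoring G) : HasGoldenSystem.{u, v} G := by
  obtain ⟨n, m, g, σ, hσ, h1, h2⟩ := hG.exists_fin
  choose p J hJ hF using fun x => (h2 x).exists_word
  let ς : G ⧸ (⊥ : Subgroup G) → Fin m := fun q => σ (QuotientGroup.quotientBot q)
  have hς : ∀ x : G, ς (QuotientGroup.mk' ⊥ x) = σ x := fun x => rfl
  have hς1 : ς 1 = σ 1 := rfl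
  refine ⟨n, m, g, ς, p, J, fun _ _ => true, ?_, ?_, ?_, ?_, ?_⟩
  · exact (eq_top_iff.2 fun x _ => (h2 x).mem_closure)
  · exact hσ.comp QuotientGroup.quotientBot.surjective
  · intro x _
    conv_lhs => rw [hJ x]
    simp [word, map_list_prod, Function.comp_def]
  · ext x
    simp only [hς, hς1, Set.mem_preimage, Set.mem_singleton_iff, SetLike.mem_coe,
      Subgroup.mem_bot]
    exact ⟨h1 x, fun h => by rw [h]⟩
  · rintro H _ h F - hP hcon x - _ ⟨y, hy, rfl⟩
    exact hF x H h F hP hcon y hy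

/-- every polycyclic-by-finite group admits a golden system. -/
theorem hasGoldenSystem_of_polycyclic_by_finite {G : Type u} [Group G]
    (h : ∃ N : Subgroup G, N.Normal ∧ N.FiniteIndex ∧ IsPolycyclic ↥N) :
    HasGoldenSystem.{u, v} G :=
  (HasTraceableColoring.of_polycyclic_by_finite h).hasGoldenSystem
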